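/- There exist a bounded limit-periodic potential V : ℤ → ℝ and a Schrödinger operator H with potential V such that for every E ∈ [−4,4], the complex number E belongs to σ(H); in particular, there is a limit-periodic potential whose Schrödinger operator has spectrum containing an interval. -/

import Mathlib

open Filter Matrix

/-- The transfer matrix `A_N(E,V) = ∏_{n=1}^N [[E − V(N−n), −1],[1,0]]`,
with the `n = 1` factor leftmost. -/
noncomputable def transferMatrix (V : ℤ → ℝ) (E : ℝ) (N : ℕ) : Matrix (Fin 2) (Fin 2) ℝ :=
  (((List.range N).map
    (fun n => !![E - V ((N : ℤ) - ((n : ℤ) + 1)), -1; (1 : ℝ), 0])).prod)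

/-- Operator norm (Euclidean, i.e. ℓ²→ℓ²) of a 2×2 real matrix. -/
noncomputable def opNorm (A : Matrix (Fin 2) (Fin 2) ℝ) : ℝ :=
  ‖LinearMap.toContinuousLinearMap (Matrix.toEuclideanLin A)‖

/-- `H` is a Schrödinger operator on `ℓ²(ℤ,ℂ)` with potential `V`. -/
def IsSchrodingerOp (V : ℤ → ℝ)
    (H : lp (fun _ : ℤ => ℂ) 2 →L[ℂ] lp (fun _ : ℤ => ℂ) 2) : Prop :=
  ∀ ψ : lp (fun _ : ℤ => ℂ) 2, ∀ n : ℤ,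
    H ψ n = ψ (n + 1) + ψ (n - 1) + (V n : ℂ) * ψ n

/-- `V` is `p`-periodic. -/
def IsPeriodic (V : ℤ → ℝ) (p : ℕ) : Prop :=
  ∀ n : ℤ, V (n + (p : ℤ)) = V n

/-- `V` is limit-periodic: a uniform limit of periodic potentials. -/
def IsLimitPeriodic (V : ℤ → ℝ) : Prop :=
  ∃ (W : ℕ → ℤ → ℝ) (p : ℕ → ℕ),
    (∀ k, 1 ≤ p k ∧ IsPeriodic (W k) (p k)) ∧
    (∀ ε > (0 : ℝ), ∃ K : ℕ, ∀ k ≥ K, ∀ n : ℤ, |V n - W k n| ≤ ε)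

/-- `(1/N)·log‖A_N(E,V)‖`. -/
noncomputable def logNormRate (V : ℤ → ℝ) (E : ℝ) (N : ℕ) : ℝ :=
  (1 / (N : ℝ)) * Real.log (opNorm (transferMatrix V E N))

/-- Individual (upper) Lyapunov exponent `limsup_N (1/N) log‖A_N(E,V)‖`. -/
noncomputable def lyapExp (V : ℤ → ℝ) (E : ℝ) : ℝ :=
  Filter.limsup (fun N : ℕ => logNormRate V E N) Filter.atTop

/-- Bottom of the (real trace of the) spectrum of `H`. -/
noncomputable def specInf (H : lp (fun _ : ℤ => ℂ) 2 →L[ℂ] lp (fun _ : ℤ => ℂ) 2) : ℝ :=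
  sInf {x : ℝ | (x : ℂ) ∈ spectrum ℂ H}


section HilbertPart
variable {F : Type*} [NormedAddCommGroup F] [InnerProductSpace ℂ F] [CompleteSpace F]

theorem sa_sub {T : F →L[ℂ] F} (hT : IsSelfAdjoint T) (x : ℝ) :
    IsSelfAdjoint (T - algebraMap ℂ (F →L[ℂ] F) (x : ℂ)) := by
  refine hT.sub ?_
  apply IsSelfAdjoint.algebraMap
  simp [IsSelfAdjoint]

/-- an approximate eigenvector forces spectrum nearby. -/
theorem spec_near [Nontrivial F] {T : F →L[ℂ] F} (hT : IsSelfAdjoint T) {x δ : ℝ} {ψ : F}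
    (hψ : ψ ≠ 0) (h : ‖T ψ - (x : ℂ) • ψ‖ ≤ δ * ‖ψ‖) :
    ∃ y : ℝ, |x - y| ≤ δ ∧ (y : ℂ) ∈ spectrum ℂ T := by
  have hpos : 0 < ‖ψ‖ := norm_pos_iff.2 hψ
  have hδ : 0 ≤ δ := by
    by_contra hc
    have := norm_nonneg (T ψ - (x : ℂ) • ψ)
    nlinarith
  by_cases hx : (x : ℂ) ∈ spectrum ℂ T
  · exact ⟨x, by simpa using hδ, hx⟩
  have hU : IsUnit (T - algebraMap ℂ (F →L[ℂ] F) (x : ℂ)) := by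
    rw [spectrum.mem_iff, not_not] at hx
    rw [← neg_sub]
    exact hx.neg
  obtain ⟨u, hu⟩ := hU
  have husa : IsSelfAdjoint (u : F →L[ℂ] F) := hu ▸ sa_sub hT x
  have huisa : IsSelfAdjoint ((u⁻¹ : (F →L[ℂ] F)ˣ) : F →L[ℂ] F) := by
    have : IsSelfAdjoint u := by
      ext1
      exact husa
    have h2 := this.inv
    exact congrArg Units.val h2
  obtain ⟨z, hz, hzn⟩ := spectrum.exists_nnnorm_eq_spectralRadius ((u⁻¹ : (F →L[ℂ] F)ˣ) : F →L[ℂ] F)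
  rw [huisa.spectralRadius_eq_nnnorm] at hzn
  have hzn' : ‖z‖ = ‖((u⁻¹ : (F →L[ℂ] F)ˣ) : F →L[ℂ] F)‖ := by
    have : ‖z‖₊ = ‖((u⁻¹ : (F →L[ℂ] F)ˣ) : F →L[ℂ] F)‖₊ := by exact_mod_cast hzn
    exact congrArg NNReal.toReal this
  have huψ : (u : F →L[ℂ] F) ψ = T ψ - (x : ℂ) • ψ := by
    rw [hu]; simp [Algebra.algebraMap_eq_smul_one]
  have hb : ‖ψ‖ ≤ ‖z‖ * (δ * ‖ψ‖) := by
    calc ‖ψ‖ = ‖((u⁻¹ : (F →L[ℂ] F)ˣ) : F →L[ℂ] F) ((u : F →L[ℂ] F) ψ)‖ := by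
          rw [← mul_apply_eq_comp, Units.inv_mul]; rfl
      _ ≤ ‖z‖ * ‖(u : F →L[ℂ] F) ψ‖ := by
          rw [hzn']; exact ContinuousLinearMap.le_opNorm _ _
      _ ≤ _ := by rw [huψ]; gcongr
  have hb' : 1 ≤ ‖z‖ * δ := by
    by_contra hc
    nlinarith
  have hzpos : 0 < ‖z‖ := by
    by_contra hc
    have : ‖z‖ = 0 := le_antisymm (not_lt.1 hc) (norm_nonneg _)
    rw [this] at hb'; linarith
  have hzi : z⁻¹ ∈ spectrum ℂ (u : F →L[ℂ] F) := spectrum.inv₀_mem_iff.2 hz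
  have hre := husa.mem_spectrum_eq_re hzi
  refine ⟨x + (z⁻¹).re, ?_, ?_⟩
  · have : |(z⁻¹).re| ≤ ‖z⁻¹‖ := Complex.abs_re_le_norm _
    rw [norm_inv] at this
    have h3 : ‖z‖⁻¹ ≤ δ := by
      rw [inv_le_iff_one_le_mul₀ hzpos]; linarith
    rw [show x - (x + (z⁻¹).re) = -(z⁻¹).re by ring, abs_neg]
    linarith
  · rw [hu, hre] at hzi
    push_cast
    rw [spectrum.mem_iff] at hzi ⊢
    convert hzi using 2
    simp only [map_add]
    abel

/-- Weyl criterion. -/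
theorem weyl {T : F →L[ℂ] F} (hT : IsSelfAdjoint T) {x : ℝ}
    (hx : (x : ℂ) ∈ spectrum ℂ T) {δ : ℝ} (hδ : 0 < δ) :
    ∃ ψ : F, ‖T ψ - (x : ℂ) • ψ‖ < δ * ‖ψ‖ := by
  by_contra! hc
  apply hx
  have hsa := sa_sub hT x
  set A := T - algebraMap ℂ (F →L[ℂ] F) (x : ℂ) with hA
  have hAψ (ψ) : A ψ = T ψ - (x : ℂ) • ψ := by
    simp [hA, Algebra.algebraMap_eq_smul_one]
  have hanti : AntilipschitzWith (Real.toNNReal δ⁻¹) A := by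
    refine ContinuousLinearMap.antilipschitz_of_bound _ fun ψ => ?_
    rw [Real.coe_toNNReal _ (by positivity), hAψ]
    rw [← div_eq_inv_mul, le_div_iff₀ hδ, mul_comm]
    exact hc ψ
  have : IsUnit A := by
    rw [ContinuousLinearMap.isUnit_iff_bijective,
      ContinuousLinearMap.bijective_iff_dense_range_and_antilipschitz]
    refine ⟨?_, _, hanti⟩
    rw [Submodule.topologicalClosure_eq_top_iff, ContinuousLinearMap.orthogonal_range,
      ← ContinuousLinearMap.star_eq_adjoint, hsa.star_eq]
    exact LinearMap.ker_eq_bot.2 hanti.injective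
  rw [spectrum.mem_resolventSet_iff, ← neg_sub]
  exact this.neg
end HilbertPart

noncomputable abbrev L2Z := lp (fun _ : ℤ => ℂ) 2

theorem two_toReal_pos : 0 < (2 : ENNReal).toReal := by norm_num

theorem memlp_shift (k : ℤ) (ψ : L2Z) : Memℓp (fun n : ℤ => (ψ (n + k) : ℂ)) 2 := by
  apply memℓp_gen
  have h := (lp.memℓp ψ).summable two_toReal_pos
  exact ((Equiv.addRight k).summable_iff (f := fun n : ℤ => ‖ψ n‖ ^ (2 : ENNReal).toReal)).2 h

theorem norm_shift_aux (k : ℤ) (ψ : L2Z) :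
    ‖(⟨fun n : ℤ => (ψ (n + k) : ℂ), memlp_shift k ψ⟩ : L2Z)‖ = ‖ψ‖ := by
  rw [lp.norm_eq_tsum_rpow two_toReal_pos, lp.norm_eq_tsum_rpow two_toReal_pos]
  congr 1
  exact (Equiv.addRight k).tsum_eq (fun n : ℤ => ‖ψ n‖ ^ (2 : ENNReal).toReal)

/-- Translation on `ℓ²(ℤ)`. -/
noncomputable def shiftOp (k : ℤ) : L2Z →L[ℂ] L2Z :=
  LinearMap.mkContinuous
    { toFun := fun ψ => ⟨fun n : ℤ => (ψ (n + k) : ℂ), memlp_shift k ψ⟩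
      map_add' := fun _ _ => rfl
      map_smul' := fun _ _ => rfl } 1
    (fun ψ => by rw [one_mul]; exact (norm_shift_aux k ψ).le)

theorem shiftOp_apply (k : ℤ) (ψ : L2Z) (n : ℤ) : shiftOp k ψ n = ψ (n + k) := rfl

theorem norm_shiftOp (k : ℤ) (ψ : L2Z) : ‖shiftOp k ψ‖ = ‖ψ‖ := norm_shift_aux k ψ

theorem inner_shiftOp (k : ℤ) (φ ψ : L2Z) :
    inner ℂ (shiftOp k φ) ψ = inner ℂ φ (shiftOp (-k) ψ) := by
  rw [lp.inner_eq_tsum, lp.inner_eq_tsum]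
  rw [← (Equiv.addRight k).tsum_eq (fun n : ℤ => inner ℂ (φ n) (shiftOp (-k) ψ n))]
  congr 1
  funext n
  simp [shiftOp_apply]

theorem memlp_mul {V : ℤ → ℝ} {C : ℝ} (hV : ∀ n, |V n| ≤ C) (ψ : L2Z) :
    Memℓp (fun n : ℤ => (V n : ℂ) * ψ n) 2 := by
  refine Memℓp.mono' (lp.memℓp ((C : ℂ) • ψ)) fun n => ?_
  have : |V n| ≤ |C| := (hV n).trans (le_abs_self C)
  simp only [lp.coeFn_smul, Pi.smul_apply, smul_eq_mul, norm_mul, Complex.norm_real,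
    Real.norm_eq_abs]
  gcongr

theorem norm_le_of_pointwise {C : ℝ} (hC : 0 ≤ C) {φ ψ : L2Z} (h : ∀ n, ‖φ n‖ ≤ C * ‖ψ n‖) :
    ‖φ‖ ≤ C * ‖ψ‖ := by
  have : ‖φ‖ ≤ ‖(C : ℂ) • ψ‖ := by
    refine lp.norm_mono (by norm_num) fun n => ?_
    rw [lp.coeFn_smul, Pi.smul_apply, norm_smul, Complex.norm_real, Real.norm_eq_abs,
      abs_of_nonneg hC]
    exact h n
  rw [norm_smul] at this
  simpa [abs_of_nonneg hC] using this

theorem exists_mulOp {V : ℤ → ℝ} {C : ℝ} (hV : ∀ n, |V n| ≤ C) :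
    ∃ M : L2Z →L[ℂ] L2Z, ∀ ψ n, M ψ n = (V n : ℂ) * ψ n := by
  refine ⟨LinearMap.mkContinuous
    { toFun := fun ψ => ⟨fun n : ℤ => (V n : ℂ) * ψ n, memlp_mul hV ψ⟩
      map_add' := fun φ ψ => by
        ext n
        simp only [lp.coeFn_add, Pi.add_apply, mul_add]
      map_smul' := fun c ψ => by
        ext n
        simp [mul_left_comm] } C (fun ψ => ?_), fun _ _ => rfl⟩
  refine norm_le_of_pointwise ((abs_nonneg _).trans (hV 0)) fun n => ?_
  simp only [LinearMap.coe_mk, AddHom.coe_mk, norm_mul, Complex.norm_real, Real.norm_eq_abs]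
  gcongr
  exact hV n

theorem exists_schr {V : ℤ → ℝ} {C : ℝ} (hV : ∀ n, |V n| ≤ C) :
    ∃ H, IsSchrodingerOp V H := by
  obtain ⟨M, hM⟩ := exists_mulOp hV
  refine ⟨shiftOp 1 + shiftOp (-1) + M, fun ψ n => ?_⟩
  simp [shiftOp_apply, hM, sub_eq_add_neg]

theorem schr_sa {V : ℤ → ℝ} {H : L2Z →L[ℂ] L2Z} (hH : IsSchrodingerOp V H) :
    IsSelfAdjoint H := by
  rw [ContinuousLinearMap.isSelfAdjoint_iff_isSymmetric]
  set M : L2Z →L[ℂ] L2Z := H - (shiftOp 1 + shiftOp (-1)) with hMdef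
  have hM : ∀ ψ n, M ψ n = (V n : ℂ) * ψ n := by
    intro ψ n
    simp [hMdef, shiftOp_apply, hH ψ n, sub_eq_add_neg]
    ring
  have hHM : H = shiftOp 1 + shiftOp (-1) + M := by rw [hMdef]; abel
  have hMs : ∀ φ ψ, inner ℂ (M φ) ψ = inner ℂ φ (M ψ) := by
    intro φ ψ
    rw [lp.inner_eq_tsum, lp.inner_eq_tsum]
    congr 1
    funext n
    rw [hM, hM]
    simp only [RCLike.inner_apply, map_mul, Complex.conj_ofReal]
    ring
  intro φ ψ
  change inner ℂ (H φ) ψ = inner ℂ φ (H ψ)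
  rw [hHM]
  simp only [_root_.add_apply, inner_add_left, inner_add_right, hMs, inner_shiftOp,
    neg_neg]
  ring

theorem schr_diff {V W : ℤ → ℝ} {H K : L2Z →L[ℂ] L2Z} (hH : IsSchrodingerOp V H)
    (hK : IsSchrodingerOp W K) {C : ℝ} (hVW : ∀ n, |V n - W n| ≤ C) (ψ : L2Z) :
    ‖H ψ - K ψ‖ ≤ C * ‖ψ‖ := by
  refine norm_le_of_pointwise ((abs_nonneg _).trans (hVW 0)) fun n => ?_
  have : (H ψ - K ψ) n = ((V n - W n : ℝ) : ℂ) * ψ n := by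
    simp only [lp.coeFn_sub, Pi.sub_apply, hH ψ n, hK ψ n]
    push_cast
    ring
  rw [this, norm_mul, Complex.norm_real, Real.norm_eq_abs]
  gcongr
  exact hVW n

instance nontrivial_L2Z : Nontrivial L2Z := by
  refine ⟨lp.single 2 (0 : ℤ) (1 : ℂ), 0, fun h => ?_⟩
  have := congrArg norm h
  rw [lp.norm_single (by norm_num)] at this
  simp at this

/-- Weyl criterion with finitely supported functions. -/
theorem weyl_fin {H : L2Z →L[ℂ] L2Z} (hH : IsSelfAdjoint H) {x : ℝ}
    (hx : (x : ℂ) ∈ spectrum ℂ H) {δ : ℝ} (hδ : 0 < δ) :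
    ∃ (ψ : L2Z) (R : ℕ), ψ ≠ 0 ∧ (∀ n : ℤ, ψ n ≠ 0 → -(R : ℤ) ≤ n ∧ n < R) ∧
      ‖H ψ - (x : ℂ) • ψ‖ ≤ δ * ‖ψ‖ := by
  obtain ⟨ψ, hψ⟩ := weyl hH hx hδ
  have hs := lp.hasSum_single (p := 2) (by norm_num) ψ
  have hopen : IsOpen {φ : L2Z | ‖H φ - (x : ℂ) • φ‖ < δ * ‖φ‖} := by
    apply isOpen_lt <;> fun_prop
  have hev := hs.eventually (hopen.mem_nhds hψ)
  obtain ⟨s, hs⟩ := hev.exists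
  set φ : L2Z := ∑ i ∈ s, lp.single 2 i (ψ i) with hφ
  have hs' : ‖H φ - (x : ℂ) • φ‖ < δ * ‖φ‖ := hs
  refine ⟨φ, ∑ i ∈ s, (i.natAbs + 1), ?_, ?_, hs'.le⟩
  · intro h0
    rw [h0] at hs'
    simp at hs'
  · intro n hn
    have hmem : n ∈ s := by
      by_contra hns
      apply hn
      rw [hφ, lp.coeFn_sum, Finset.sum_apply]
      refine Finset.sum_eq_zero fun i hi => ?_
      apply lp.single_apply_ne
      rintro rfl
      exact hns hi
    have := Finset.single_le_sum (f := fun i : ℤ => i.natAbs + 1) (fun _ _ => Nat.zero_le _) hmem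
    omega

/-- periodic potential whose spectrum is `ε`-dense in `[-4,4]`. -/
def GoodPot (V : ℤ → ℝ) (ε : ℝ) : Prop :=
  ∃ (p : ℕ) (H : L2Z →L[ℂ] L2Z), 1 ≤ p ∧ IsPeriodic V p ∧ (∃ C, ∀ n, |V n| ≤ C) ∧
    IsSchrodingerOp V H ∧
    ∀ E ∈ Set.Icc (-4 : ℝ) 4, ∃ y : ℝ, |E - y| ≤ ε ∧ (y : ℂ) ∈ spectrum ℂ H

theorem good_base : ∃ ε > 0, GoodPot (fun _ => 0) ε := by
  obtain ⟨H, hH⟩ := exists_schr (V := fun _ => 0) (C := 0) (by simp)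
  obtain ⟨z, hz⟩ := spectrum.nonempty H
  have hre := (schr_sa hH).mem_spectrum_eq_re hz
  rw [hre] at hz
  refine ⟨4 + |z.re|, by positivity, 1, H, le_rfl, fun n => rfl, ⟨0, by simp⟩, hH, fun E hE => ?_⟩
  refine ⟨z.re, ?_, hz⟩
  have := abs_sub E z.re
  have h4 : |E| ≤ 4 := abs_le.2 hE
  linarith

theorem periodic_mul {V : ℤ → ℝ} {p : ℕ} (h : IsPeriodic V p) (k : ℕ) (n : ℤ) :
    V (n + (p : ℤ) * k) = V n := by
  induction k with
  | zero => simp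
  | succ k ih =>
    rw [← ih, ← h (n + p * k)]
    congr 1
    push_cast
    ring

theorem good_step {V : ℤ → ℝ} {ε : ℝ} (hε : 0 < ε) (hG : GoodPot V ε) :
    ∃ V', (∀ n, |V n - V' n| ≤ ε) ∧ GoodPot V' (ε / 2) := by
  obtain ⟨p, H, hp, hper, ⟨C, hC⟩, hH, hden⟩ := hG
  have hsa := schr_sa hH
  set x : ℕ → ℝ := fun i => min 4 (-4 + i * (ε / 4)) with hx
  have hxm : ∀ i, x i ∈ Set.Icc (-4 : ℝ) 4 := fun i =>
    ⟨le_min (by norm_num) (by have : 0 ≤ (i : ℝ) * (ε / 4) := by positivity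
                              linarith), min_le_left _ _⟩
  have key : ∀ i, ∃ (y : ℝ) (ψ : L2Z) (R : ℕ), |x i - y| ≤ ε ∧ ψ ≠ 0 ∧
      (∀ n : ℤ, ψ n ≠ 0 → -(R : ℤ) ≤ n ∧ n < R) ∧ ‖H ψ - (y : ℂ) • ψ‖ ≤ ε / 4 * ‖ψ‖ := by
    intro i
    obtain ⟨y, hy, hys⟩ := hden (x i) (hxm i)
    obtain ⟨ψ, R, h1, h2, h3⟩ := weyl_fin hsa hys (δ := ε / 4) (by positivity)
    exact ⟨y, ψ, R, hy, h1, h2, h3⟩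
  choose y ψ R hy hψ0 hψR hψ using key
  set N : ℕ := ⌊8 / (ε / 4)⌋₊ + 1 with hN
  set Q : ℕ := (∑ i ∈ Finset.range N, R i) + 1 with hQ
  have hRQ : ∀ i < N, R i ≤ Q := by
    intro i hi
    have := Finset.single_le_sum (f := R) (fun _ _ => Nat.zero_le _) (Finset.mem_range.2 hi)
    omega
  set P : ℕ := p * (2 * Q) with hP
  have hPpos : 0 < P := by rw [hP, hQ]; positivity
  set c : ℕ → ℝ := fun i => x i - y i with hc
  set V' : ℤ → ℝ := fun n => V n + c (((n / (P : ℤ)) % (N : ℤ)).toNat) with hV'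
  have hdiff : ∀ n, |V n - V' n| ≤ ε := by
    intro n
    simp only [hV', sub_add_cancel_left, abs_neg]
    exact hy _
  have hbd : ∀ n, |V' n| ≤ C + ε := by
    intro n
    have h1 := hdiff n
    have h2 := hC n
    rw [abs_le] at *
    constructor <;> linarith
  obtain ⟨H', hH'⟩ := exists_schr hbd
  refine ⟨V', hdiff, P * N, H', ?_, ?_, ⟨_, hbd⟩, hH', ?_⟩
  · exact Nat.mul_pos hPpos (by omega)
  · intro n
    simp only [hV']
    have h1 : V (n + ((P * N : ℕ) : ℤ)) = V n := by
      rw [← periodic_mul hper (2 * Q * N) n, hP]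
      congr 1
      push_cast
      ring
    have h2 : (n + ((P * N : ℕ) : ℤ)) / (P : ℤ) = n / (P : ℤ) + N := by
      push_cast
      rw [Int.add_mul_ediv_left _ _ (by omega)]
    rw [h1, h2, Int.add_emod_right]
  · intro E hE
    set i : ℕ := ⌊(E + 4) / (ε / 4)⌋₊ with hi
    have hnn : 0 ≤ (E + 4) / (ε / 4) := div_nonneg (by linarith [hE.1]) (by positivity)
    have hiN : i < N := by
      rw [hN, Nat.lt_succ_iff]
      apply Nat.floor_le_floor
      gcongr
      linarith [hE.2]
    have hi1 : (i : ℝ) * (ε / 4) ≤ E + 4 := by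
      have := Nat.floor_le hnn
      rwa [le_div_iff₀ (by positivity)] at this
    have hi2 : E + 4 < ((i : ℝ) + 1) * (ε / 4) := by
      have := Nat.lt_floor_add_one ((E + 4) / (ε / 4))
      rwa [div_lt_iff₀ (by positivity)] at this
    have hxi : x i = -4 + i * (ε / 4) := min_eq_right (by linarith [hE.2])
    set t : ℤ := (i : ℤ) * P + p * Q with ht
    have htr : H' (shiftOp (-t) (ψ i)) - (x i : ℂ) • shiftOp (-t) (ψ i)
        = shiftOp (-t) (H (ψ i) - (y i : ℂ) • ψ i) := by
      ext n
      simp only [lp.coeFn_sub, Pi.sub_apply, lp.coeFn_smul, Pi.smul_apply, smul_eq_mul,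
        shiftOp_apply, hH' _ n, hH _ (n + -t)]
      rw [show n + 1 + -t = n + -t + 1 by ring, show n - 1 + -t = n + -t - 1 by ring]
      by_cases h0 : ψ i (n + -t) = 0
      · rw [h0]; ring
      · obtain ⟨ha, hb⟩ := hψR i _ h0
        have hRi := hRQ i hiN
        have hV1 : V n = V (n + -t) := by
          rw [← periodic_mul hper (i * (2 * Q) + Q) (n + -t)]
          congr 1
          rw [ht, hP]
          push_cast
          ring
        have hpQ : (Q : ℤ) ≤ p * Q := by
          have : (1 : ℤ) ≤ p := by exact_mod_cast hp
          nlinarith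
        have hPQ : (P : ℤ) = 2 * (p * Q) := by
          rw [hP]; push_cast; ring
        have hdv : n / (P : ℤ) = i := by
          rw [Int.ediv_eq_iff_of_pos (by omega)]
          constructor
          · linarith
          · linarith
        have hV2 : V' n = V (n + -t) + (x i - y i) := by
          simp only [hV', hdv]
          rw [Int.emod_eq_of_lt (by omega) (by omega), Int.toNat_natCast, hV1]
        rw [hV2]
        push_cast
        ring
    have hne : shiftOp (-t) (ψ i) ≠ 0 := by
      rw [← norm_ne_zero_iff, norm_shiftOp, norm_ne_zero_iff]
      exact hψ0 i
    obtain ⟨z, hz, hzs⟩ := spec_near (schr_sa hH') (x := x i) (δ := ε / 4) hne (by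
      rw [htr, norm_shiftOp, norm_shiftOp]
      exact hψ i)
    refine ⟨z, ?_, hzs⟩
    rw [hxi, abs_le] at hz
    rw [abs_le]
    constructor <;> linarith [hz.1, hz.2]

/-- there is a bounded limit-periodic potential whose Schrödinger
operator has spectrum containing `[-4,4]`. -/
theorem statement18 :
    ∃ (V : ℤ → ℝ) (H : lp (fun _ : ℤ => ℂ) 2 →L[ℂ] lp (fun _ : ℤ => ℂ) 2),
      (∃ C : ℝ, ∀ n : ℤ, |V n| ≤ C) ∧ IsLimitPeriodic V ∧ IsSchrodingerOp V H ∧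
      ∀ E ∈ Set.Icc (-4 : ℝ) 4, (E : ℂ) ∈ spectrum ℂ H := by
  obtain ⟨ε, hε, hbase⟩ := good_base
  have hpos : ∀ k : ℕ, 0 < 2 * ε / 2 / 2 ^ k := fun k => by positivity
  -- the sequence of periodic potentials
  let S := fun k : ℕ => {V : ℤ → ℝ // GoodPot V (2 * ε / 2 / 2 ^ k)}
  have hstep : ∀ k (s : S k), ∃ s' : S (k + 1), ∀ n, |s.1 n - s'.1 n| ≤ 2 * ε / 2 / 2 ^ k := by
    intro k s
    obtain ⟨V', h1, h2⟩ := good_step (hpos k) s.2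
    refine ⟨⟨V', ?_⟩, h1⟩
    convert h2 using 1
    rw [pow_succ, div_div (2 * ε / 2)]
  choose nxt hnxt using hstep
  let s0 : S 0 := ⟨fun _ => 0, by convert hbase using 1; simp⟩
  let s : ∀ k, S k := fun k => Nat.rec s0 (fun k s => nxt k s) k
  have hs : ∀ k n, |(s k).1 n - (s (k + 1)).1 n| ≤ 2 * ε / 2 / 2 ^ k := fun k n => hnxt k (s k) n
  have hdist : ∀ n k, dist ((s k).1 n) ((s (k + 1)).1 n) ≤ 2 * ε / 2 / 2 ^ k := fun n k => hs k n
  have hlim : ∀ n, ∃ v, Tendsto (fun k => (s k).1 n) atTop (nhds v) := fun n =>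
    cauchySeq_tendsto_of_complete (cauchySeq_of_le_geometric_two (hdist n))
  choose V hV using hlim
  have hVk : ∀ k n, |V n - (s k).1 n| ≤ 2 * ε / 2 ^ k := fun k n => by
    rw [abs_sub_comm]
    exact dist_le_of_le_geometric_two_of_tendsto (hdist n) (hV n) k
  have hsmall : ∀ δ > (0 : ℝ), ∃ K : ℕ, ∀ k ≥ K, 2 * ε / 2 ^ k ≤ δ := by
    intro δ hδ
    have ht : Tendsto (fun k : ℕ => 2 * ε / (2 : ℝ) ^ k) atTop (nhds 0) :=
      tendsto_const_nhds.div_atTop (tendsto_pow_atTop_atTop_of_one_lt (by norm_num))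
    obtain ⟨K, hK⟩ := eventually_atTop.1 (ht.eventually (ge_mem_nhds hδ))
    exact ⟨K, hK⟩
  have hVb : ∀ n, |V n| ≤ 2 * ε := fun n => by
    have := hVk 0 n
    simpa [s, s0] using this
  obtain ⟨H, hH⟩ := exists_schr hVb
  refine ⟨V, H, ⟨_, hVb⟩, ?_, hH, ?_⟩
  · have hpk : ∀ k, ∃ p : ℕ, 1 ≤ p ∧ IsPeriodic (s k).1 p := fun k => by
      obtain ⟨p, _, h1, h2, _⟩ := (s k).2
      exact ⟨p, h1, h2⟩
    choose p hp using hpk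
    refine ⟨fun k => (s k).1, p, hp, fun δ hδ => ?_⟩
    obtain ⟨K, hK⟩ := hsmall δ hδ
    exact ⟨K, fun k hk n => (hVk k n).trans (hK k hk)⟩
  · intro E hE
    rw [← (spectrum.isClosed (𝕜 := ℂ) H).closure_eq, Metric.mem_closure_iff]
    intro δ hδ
    obtain ⟨K, hK⟩ := hsmall (δ / 4) (by positivity)
    have hKK := hK K le_rfl
    obtain ⟨p, Hk, -, -, -, hHk, hden⟩ := (s K).2
    obtain ⟨y, hy, hys⟩ := hden E hE
    obtain ⟨ψ, hψ⟩ := weyl (schr_sa hHk) hys (δ := δ / 4) (by positivity)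
    have hψ0 : ψ ≠ 0 := by
      rintro rfl
      simp at hψ
    have hd := schr_diff hH hHk (hVk K) ψ
    have hhalf : 2 * ε / 2 / 2 ^ K ≤ δ / 4 := by
      refine le_trans ?_ hKK
      gcongr
      linarith
    obtain ⟨z, hz, hzs⟩ := spec_near (schr_sa hH) (x := y) (δ := δ / 2) hψ0 (by
      calc ‖H ψ - (y : ℂ) • ψ‖ = ‖(H ψ - Hk ψ) + (Hk ψ - (y : ℂ) • ψ)‖ := by
            congr 1; abel
        _ ≤ ‖H ψ - Hk ψ‖ + ‖Hk ψ - (y : ℂ) • ψ‖ := norm_add_le _ _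
        _ ≤ δ / 4 * ‖ψ‖ + δ / 4 * ‖ψ‖ :=
            add_le_add (hd.trans (by gcongr)) hψ.le
        _ = δ / 2 * ‖ψ‖ := by ring)
    refine ⟨z, hzs, ?_⟩
    rw [Complex.dist_eq, ← Complex.ofReal_sub, Complex.norm_real, Real.norm_eq_abs]
    have := abs_sub_le E y z
    linarith
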